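/- Let m ≥ 4 and n = 3m + 1. Then for every connected simple graph G on n vertices with domination number 3, ρ(G) ≥ ρ(G_2(m−1, m−4, m−1)), with equality if and only if G is isomorphic to G_2(m−1, m−4, m−1). -/

import Mathlib

open SimpleGraph

/-- Adjacency matrix of a simple graph over ℝ. -/
noncomputable def adjMat {V : Type*} (G : SimpleGraph V) : Matrix V V ℝ :=
  Matrix.of fun i j => @ite ℝ (G.Adj i j) (Classical.propDecidable _) 1 0

/-- Spectral radius: the largest eigenvalue (supremum of the real spectrum)
of the adjacency matrix. -/
noncomputable def specRad {V : Type*} [Fintype V] [DecidableEq V]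
    (G : SimpleGraph V) : ℝ :=
  sSup (spectrum ℝ (adjMat G))

/-- `D` is a dominating set of `G`. -/
def IsDomSet {V : Type*} (G : SimpleGraph V) (D : Finset V) : Prop :=
  ∀ v ∉ D, ∃ u ∈ D, G.Adj u v

/-- The domination number of `G`. -/
noncomputable def domNum {V : Type*} [Fintype V] (G : SimpleGraph V) : ℕ :=
  sInf {k | ∃ D : Finset V, IsDomSet G D ∧ D.card = k}

/-- The tree `G₂(a,b,c)`: the path v1 v4 v5 v2 v6 v7 v3 (vertices `Sum.inl 0, …, Sum.inl 6`
in path order), with `a` pendant edges at v1, `b` pendant edges at v2 and `c` pendant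
edges at v3. -/
def G2graph (a b c : ℕ) : SimpleGraph (Fin 7 ⊕ (Fin a ⊕ Fin b ⊕ Fin c)) :=
  SimpleGraph.fromRel (fun x y =>
    (x = Sum.inl 0 ∧ y = Sum.inl 1) ∨
    (x = Sum.inl 1 ∧ y = Sum.inl 2) ∨
    (x = Sum.inl 2 ∧ y = Sum.inl 3) ∨
    (x = Sum.inl 3 ∧ y = Sum.inl 4) ∨
    (x = Sum.inl 4 ∧ y = Sum.inl 5) ∨
    (x = Sum.inl 5 ∧ y = Sum.inl 6) ∨
    (∃ j : Fin a, x = Sum.inl 0 ∧ y = Sum.inr (Sum.inl j)) ∨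
    (∃ j : Fin b, x = Sum.inl 3 ∧ y = Sum.inr (Sum.inr (Sum.inl j))) ∨
    (∃ j : Fin c, x = Sum.inl 6 ∧ y = Sum.inr (Sum.inr (Sum.inr j))))

theorem adjMat_congr {V W : Type*} {G : SimpleGraph V} {H : SimpleGraph W} {i j : V} {k l : W}
    (h : G.Adj i j ↔ H.Adj k l) : adjMat G i j = adjMat H k l := by
  by_cases h1 : G.Adj i j
  · have h2 := h.1 h1
    simp [adjMat, h1, h2]
  · have h2 : ¬ H.Adj k l := fun h' => h1 (h.2 h')
    simp [adjMat, h1, h2]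

theorem adjMat_isHermitian {V : Type*} (G : SimpleGraph V) : (adjMat G).IsHermitian := by
  ext i j
  rw [Matrix.conjTranspose_apply, star_trivial]
  exact adjMat_congr (G.adj_comm j i)

theorem adjMat_nonneg {V : Type*} (G : SimpleGraph V) (i j : V) : 0 ≤ adjMat G i j := by
  simp only [adjMat, Matrix.of_apply]
  split_ifs <;> norm_num

theorem adjMat_adj {V : Type*} {G : SimpleGraph V} {i j : V} (h : G.Adj i j) :
    adjMat G i j = 1 := by
  simp [adjMat, h]

theorem adjMat_not {V : Type*} {G : SimpleGraph V} {i j : V} (h : ¬ G.Adj i j) :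
    adjMat G i j = 0 := by
  simp [adjMat, h]

/-- Quadratic form of `A - lam`. -/
noncomputable def qForm {V : Type*} [Fintype V] (G : SimpleGraph V) (lam : ℝ) (x : V → ℝ) : ℝ :=
  (∑ v, ∑ w, adjMat G v w * (x v * x w)) - lam * ∑ v, x v ^ 2

theorem psd_of_specRad_le {V : Type*} [Fintype V] [DecidableEq V] (G : SimpleGraph V) {lam : ℝ}
    (h : specRad G ≤ lam) : (algebraMap ℝ (Matrix V V ℝ) lam - adjMat G).PosSemidef := by
  have hH : (algebraMap ℝ (Matrix V V ℝ) lam - adjMat G).IsHermitian := by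
    refine Matrix.IsHermitian.sub ?_ (adjMat_isHermitian G)
    rw [Algebra.algebraMap_eq_smul_one]
    ext i j
    simp [Matrix.conjTranspose_apply, Matrix.one_apply, eq_comm]
  rw [Matrix.posSemidef_iff_isHermitian_and_spectrum_nonneg]
  refine ⟨hH, ?_⟩
  intro μ hμ
  rw [← spectrum.singleton_sub_eq] at hμ
  obtain ⟨a, ha, b, hb, hab⟩ := Set.mem_sub.1 hμ
  rw [Set.mem_singleton_iff] at ha
  have hfin : (spectrum ℝ (adjMat G)).Finite := Matrix.finite_spectrum _
  have : b ≤ specRad G := le_csSup hfin.bddAbove hb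
  simp only [Set.mem_ofPred_eq]
  linarith

theorem qForm_eq {V : Type*} [Fintype V] [DecidableEq V] (G : SimpleGraph V) (lam : ℝ)
    (x : V → ℝ) : qForm G lam x =
      - (star x ⬝ᵥ ((algebraMap ℝ (Matrix V V ℝ) lam - adjMat G).mulVec x)) := by
  have : (algebraMap ℝ (Matrix V V ℝ) lam - adjMat G).mulVec x
      = lam • x - (adjMat G).mulVec x := by
    rw [Matrix.sub_mulVec, Algebra.algebraMap_eq_smul_one, Matrix.smul_mulVec, Matrix.one_mulVec]
  rw [this]
  simp only [qForm, dotProduct, Matrix.mulVec, Pi.sub_apply, Pi.smul_apply, star_trivial,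
    smul_eq_mul, mul_sub, Finset.sum_sub_distrib, Finset.mul_sum]
  have h1 : ∀ v, ∑ w, adjMat G v w * (x v * x w) = ∑ w, x v * (adjMat G v w * x w) :=
    fun v => Finset.sum_congr rfl fun w _ => by ring
  have h2 : ∀ v, lam * x v ^ 2 = x v * (lam * x v) := fun v => by ring
  simp only [h1, h2]
  ring

theorem qForm_nonpos {V : Type*} [Fintype V] [DecidableEq V] (G : SimpleGraph V) {lam : ℝ}
    (h : specRad G ≤ lam) (x : V → ℝ) : qForm G lam x ≤ 0 := by
  rw [qForm_eq]
  have := (psd_of_specRad_le G h).dotProduct_mulVec_nonneg x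
  linarith

theorem pos_of_qForm_zero {V : Type*} [Fintype V] [DecidableEq V] (G : SimpleGraph V) {lam : ℝ}
    (h : specRad G ≤ lam) (hc : G.Connected) (x : V → ℝ) (hx : ∀ v, 0 ≤ x v)
    (hq : 0 ≤ qForm G lam x) (z : V) (hz : x z = 0) : ∀ v, x v = 0 := by
  have hq0 : qForm G lam x = 0 := le_antisymm (qForm_nonpos G h x) hq
  rw [qForm_eq, neg_eq_zero, (psd_of_specRad_le G h).dotProduct_mulVec_zero_iff] at hq0
  have this : (algebraMap ℝ (Matrix V V ℝ) lam - adjMat G).mulVec x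
      = lam • x - (adjMat G).mulVec x := by
    rw [Matrix.sub_mulVec, Algebra.algebraMap_eq_smul_one, Matrix.smul_mulVec, Matrix.one_mulVec]
  rw [this] at hq0
  have step : ∀ u w, G.Adj u w → x u = 0 → x w = 0 := by
    intro u w huw hu
    have h1 := congrFun hq0 u
    simp only [Pi.sub_apply, Pi.smul_apply, hu, smul_eq_mul, mul_zero, zero_sub, Pi.zero_apply,
      neg_eq_zero, Matrix.mulVec, dotProduct] at h1
    rw [Finset.sum_eq_zero_iff_of_nonneg
      (fun v _ => mul_nonneg (adjMat_nonneg G u v) (hx v))] at h1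
    have := h1 w (Finset.mem_univ _)
    rwa [adjMat_adj huw, one_mul] at this
  intro v
  obtain ⟨p⟩ := hc.preconnected z v
  induction p with
  | nil => exact hz
  | cons hadj _ ih => exact ih (step _ _ hadj hz)

theorem specRad_le_of_eigen {V : Type*} [Fintype V] [DecidableEq V] (G : SimpleGraph V) {lam : ℝ}
    (hl : 0 ≤ lam) (y : V → ℝ) (hy : ∀ v, 0 < y v)
    (he : ∀ v, ∑ w, adjMat G v w * y w = lam * y v) : specRad G ≤ lam := by
  refine Real.sSup_le ?_ hl
  intro μ hμ
  rw [← Matrix.spectrum_toLin', ← Module.End.hasEigenvalue_iff_mem_spectrum] at hμ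
  obtain ⟨z, hz⟩ := hμ.exists_hasEigenvector
  have hz1 := hz.apply_eq_smul
  have hz0 := hz.2
  have hk : ∀ v, μ * |z v| ≤ ∑ w, adjMat G v w * |z w| := by
    intro v
    have h1 := congrFun hz1 v
    simp only [Matrix.toLin'_apply, Matrix.mulVec, dotProduct, Pi.smul_apply, smul_eq_mul] at h1
    calc μ * |z v| ≤ |μ| * |z v| := by gcongr; exact le_abs_self _
      _ = |∑ w, adjMat G v w * z w| := by rw [h1, abs_mul]
      _ ≤ ∑ w, |adjMat G v w * z w| := Finset.abs_sum_le_sum_abs _ _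
      _ = _ := Finset.sum_congr rfl fun w _ => by rw [abs_mul, abs_of_nonneg (adjMat_nonneg G v w)]
  have hS : 0 < ∑ v, y v * |z v| := by
    obtain ⟨v, hv⟩ := Function.ne_iff.1 hz0
    exact Finset.sum_pos' (fun w _ => mul_nonneg (hy w).le (abs_nonneg _))
      ⟨v, Finset.mem_univ _, mul_pos (hy v) (abs_pos.2 hv)⟩
  have hsymm : ∀ v w, adjMat G v w = adjMat G w v := fun v w => adjMat_congr (G.adj_comm v w)
  have : μ * ∑ v, y v * |z v| ≤ lam * ∑ v, y v * |z v| := by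
    calc μ * ∑ v, y v * |z v| = ∑ v, y v * (μ * |z v|) := by
          rw [Finset.mul_sum]; exact Finset.sum_congr rfl fun w _ => by ring
      _ ≤ ∑ v, y v * ∑ w, adjMat G v w * |z w| :=
          Finset.sum_le_sum fun v _ => mul_le_mul_of_nonneg_left (hk v) (hy v).le
      _ = ∑ v, ∑ w, y v * (adjMat G v w * |z w|) := by simp only [Finset.mul_sum]
      _ = ∑ w, ∑ v, y v * (adjMat G v w * |z w|) := Finset.sum_comm
      _ = ∑ w, |z w| * ∑ v, adjMat G w v * y v := by
          refine Finset.sum_congr rfl fun w _ => ?_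
          rw [Finset.mul_sum]
          exact Finset.sum_congr rfl fun v _ => by rw [hsymm v w]; ring
      _ = lam * ∑ v, y v * |z v| := by
          rw [Finset.mul_sum]
          exact Finset.sum_congr rfl fun w _ => by rw [he]; ring
  exact le_of_mul_le_mul_right this hS

theorem specRad_iso {V W : Type*} [Fintype V] [DecidableEq V] [Fintype W] [DecidableEq W]
    {G : SimpleGraph V} {H : SimpleGraph W} (e : G ≃g H) : specRad G = specRad H := by
  have : adjMat H = Matrix.reindexAlgEquiv ℝ ℝ e.toEquiv (adjMat G) := by
    ext i j
    rw [Matrix.coe_reindexAlgEquiv, Matrix.reindex_apply, Matrix.submatrix_apply]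
    refine adjMat_congr ?_
    have := e.map_adj_iff (v := e.symm i) (w := e.symm j)
    rw [RelIso.apply_symm_apply, RelIso.apply_symm_apply] at this
    exact this
  unfold specRad
  rw [this, AlgEquiv.spectrum_eq]

/-- The test vector. -/
noncomputable def tVec {V : Type*} [DecidableEq V] (D : Finset V) (p : V → V) (lam : ℝ)
    (a f : V → ℝ) : V → ℝ := fun v => if v ∈ D then a v else (a (p v) + f v) / lam

theorem star_bound {V : Type*} [Fintype V] [DecidableEq V] (G : SimpleGraph V) (lam : ℝ)
    (hl : 0 < lam) (D : Finset V) (p : V → V) (hp : ∀ v ∉ D, p v ∈ D ∧ G.Adj (p v) v)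
    (E : Finset (V × V)) (hE : ∀ e ∈ E, G.Adj e.1 e.2) (hE2 : ∀ e ∈ E, (e.2, e.1) ∉ E)
    (hE3 : ∀ e ∈ E, ¬ (e.1 ∉ D ∧ e.2 = p e.1) ∧ ¬ (e.2 ∉ D ∧ e.1 = p e.2))
    (a f : V → ℝ) (ha : ∀ v, 0 ≤ a v) (hf : ∀ v, 0 ≤ f v) :
    ∑ c ∈ D, a c ^ 2 * (((Dᶜ.filter (fun v => p v = c)).card : ℝ) - lam ^ 2) - ∑ v, f v ^ 2
      + 2 * lam * ∑ e ∈ E, tVec D p lam a f e.1 * tVec D p lam a f e.2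
      ≤ lam * qForm G lam (tVec D p lam a f) := by
  set x := tVec D p lam a f with hx
  have hx0 : ∀ v, 0 ≤ x v := by
    intro v
    simp only [hx, tVec]
    split_ifs
    · exact ha v
    · exact div_nonneg (add_nonneg (ha _) (hf _)) hl.le
  have hB : ∀ v w, (if v ∉ D ∧ w = p v then (1:ℝ) else 0) + (if w ∉ D ∧ v = p w then 1 else 0)
      + (if (v, w) ∈ E then 1 else 0) + (if (w, v) ∈ E then 1 else 0) ≤ adjMat G v w := by
    intro v w
    by_cases h1 : v ∉ D ∧ w = p v
    · have hadj : G.Adj v w := by rw [h1.2]; exact (hp v h1.1).2.symm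
      have h2 : ¬ (w ∉ D ∧ v = p w) := fun h => h.1 (by rw [h1.2]; exact (hp v h1.1).1)
      have h3 : (v, w) ∉ E := fun h => (hE3 _ h).1 h1
      have h4 : (w, v) ∉ E := fun h => (hE3 _ h).2 h1
      rw [if_pos h1, if_neg h2, if_neg h3, if_neg h4, adjMat_adj hadj]; norm_num
    · by_cases h2 : w ∉ D ∧ v = p w
      · have hadj : G.Adj v w := by rw [h2.2]; exact (hp w h2.1).2
        have h3 : (v, w) ∉ E := fun h => (hE3 _ h).2 h2
        have h4 : (w, v) ∉ E := fun h => (hE3 _ h).1 h2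
        rw [if_neg h1, if_pos h2, if_neg h3, if_neg h4, adjMat_adj hadj]; norm_num
      · by_cases h3 : (v, w) ∈ E
        · have h4 : (w, v) ∉ E := hE2 _ h3
          rw [if_neg h1, if_neg h2, if_pos h3, if_neg h4, adjMat_adj (hE _ h3)]; norm_num
        · by_cases h4 : (w, v) ∈ E
          · rw [if_neg h1, if_neg h2, if_neg h3, if_pos h4, adjMat_adj (hE _ h4).symm]; norm_num
          · rw [if_neg h1, if_neg h2, if_neg h3, if_neg h4]
            have := adjMat_nonneg G v w
            linarith
  have hS1 : ∑ v, ∑ w, (if v ∉ D ∧ w = p v then (1:ℝ) else 0) * (x v * x w)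
      = ∑ v ∈ Dᶜ, x v * x (p v) := by
    rw [← Finset.sum_filter_add_sum_filter_not Finset.univ (· ∈ Dᶜ)]
    have hz : ∑ v with v ∉ Dᶜ, ∑ w, (if v ∉ D ∧ w = p v then (1:ℝ) else 0) * (x v * x w) = 0 := by
      refine Finset.sum_eq_zero fun v hv => Finset.sum_eq_zero fun w _ => ?_
      have : v ∈ D := by simpa using hv
      simp [this]
    rw [hz, add_zero]
    rw [show (Finset.univ.filter (· ∈ Dᶜ)) = Dᶜ by ext; simp]
    refine Finset.sum_congr rfl fun v hv => ?_
    have : v ∉ D := by simpa using hv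
    simp [this]
  have hS2 : ∑ v, ∑ w, (if w ∉ D ∧ v = p w then (1:ℝ) else 0) * (x v * x w)
      = ∑ v ∈ Dᶜ, x v * x (p v) := by
    rw [← hS1, Finset.sum_comm]
    refine Finset.sum_congr rfl fun v _ => Finset.sum_congr rfl fun w _ => by ring
  have hS3 : ∑ v, ∑ w, (if (v, w) ∈ E then (1:ℝ) else 0) * (x v * x w)
      = ∑ e ∈ E, x e.1 * x e.2 := by
    rw [← Finset.sum_product' Finset.univ Finset.univ
      (fun v w => (if (v, w) ∈ E then (1:ℝ) else 0) * (x v * x w))]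
    simp [Finset.univ_product_univ]
  have hS4 : ∑ v, ∑ w, (if (w, v) ∈ E then (1:ℝ) else 0) * (x v * x w)
      = ∑ e ∈ E, x e.1 * x e.2 := by
    rw [← hS3, Finset.sum_comm]
    refine Finset.sum_congr rfl fun v _ => Finset.sum_congr rfl fun w _ => by ring
  have hA : 2 * ∑ v ∈ Dᶜ, x v * x (p v) + 2 * ∑ e ∈ E, x e.1 * x e.2
      ≤ ∑ v, ∑ w, adjMat G v w * (x v * x w) := by
    calc _ = ∑ v, ∑ w, ((if v ∉ D ∧ w = p v then (1:ℝ) else 0)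
          + (if w ∉ D ∧ v = p w then 1 else 0)
          + (if (v, w) ∈ E then 1 else 0) + (if (w, v) ∈ E then 1 else 0)) * (x v * x w) := by
          simp only [add_mul, Finset.sum_add_distrib, hS1, hS2, hS3, hS4]
          ring
      _ ≤ _ := Finset.sum_le_sum fun v _ => Finset.sum_le_sum fun w _ =>
          mul_le_mul_of_nonneg_right (hB v w) (mul_nonneg (hx0 v) (hx0 w))
  have hsq : ∑ v, x v ^ 2 = ∑ v ∈ D, a v ^ 2 + ∑ v ∈ Dᶜ, x v ^ 2 := by
    rw [← Finset.sum_add_sum_compl D]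
    congr 1
    exact Finset.sum_congr rfl fun v hv => by simp [hx, tVec, hv]
  have hleaf : ∑ v ∈ Dᶜ, (2 * lam * (x v * x (p v)) - lam ^ 2 * x v ^ 2)
      = ∑ v ∈ Dᶜ, a (p v) ^ 2 - ∑ v ∈ Dᶜ, f v ^ 2 := by
    rw [← Finset.sum_sub_distrib]
    refine Finset.sum_congr rfl fun v hv => ?_
    have hv' : v ∉ D := by simpa using hv
    have e1 : x v = (a (p v) + f v) / lam := by simp [hx, tVec, hv']
    have e2 : x (p v) = a (p v) := by simp [hx, tVec, (hp v hv').1]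
    rw [e1, e2]
    field_simp
    ring
  have hfib : ∑ v ∈ Dᶜ, a (p v) ^ 2
      = ∑ c ∈ D, a c ^ 2 * ((Dᶜ.filter (fun v => p v = c)).card : ℝ) := by
    rw [← Finset.sum_fiberwise_of_maps_to (s := Dᶜ) (t := D) (g := p)
      (fun v hv => (hp v (by simpa using hv)).1)]
    refine Finset.sum_congr rfl fun c _ => ?_
    rw [Finset.sum_congr rfl (g := fun _ => a c ^ 2)
      (fun v hv => by rw [(Finset.mem_filter.1 hv).2])]
    simp [mul_comm]
  have hff : ∑ v ∈ Dᶜ, f v ^ 2 ≤ ∑ v, f v ^ 2 :=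
    Finset.sum_le_sum_of_subset_of_nonneg (Finset.subset_univ _) (fun v _ _ => sq_nonneg _)
  have hA' := mul_le_mul_of_nonneg_left hA hl.le
  simp only [mul_sub, Finset.sum_sub_distrib, ← Finset.sum_mul, ← Finset.mul_sum] at hleaf ⊢
  rw [← hfib]
  unfold qForm
  rw [hsq]
  nlinarith

/-- Number of leaves assigned to the centre `c`. -/
def dg {V : Type*} [Fintype V] [DecidableEq V] (p : V → V) (c : V) : ℕ :=
  (Finset.univ.filter (fun v => p v = c ∧ v ≠ c)).card

/-- A dominating triple together with an assignment of the other vertices. -/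
structure Cfg {V : Type*} [Fintype V] [DecidableEq V] (G : SimpleGraph V) (m : ℕ) (lam s : ℝ)
    (p : V → V) (i j k : V) : Prop where
  hij : i ≠ j
  hik : i ≠ k
  hjk : j ≠ k
  pi : p i = i
  pj : p j = j
  pk : p k = k
  hp : ∀ v, v ≠ i → v ≠ j → v ≠ k → (p v = i ∨ p v = j ∨ p v = k) ∧ G.Adj (p v) v
  card : dg p i + dg p j + dg p k + 2 = 3 * m
  hm : 4 ≤ m
  spec : specRad G ≤ lam
  conn : G.Connected
  hl : 2 ≤ lam
  hs : 0 < s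
  hss : s ^ 2 + s ≤ 1
  hlt : lam ^ 2 = m + s
  hkey : s * (lam ^ 2 - 1) * (s + 2) = 3 * s + 4

/-- Weights of the centres. -/
def aV {V : Type*} [DecidableEq V] (i j : V) (ai aj ak : ℝ) : V → ℝ :=
  fun v => if v = i then ai else if v = j then aj else ak

namespace Cfg

variable {V : Type*} [Fintype V] [DecidableEq V] {G : SimpleGraph V} {m : ℕ} {lam s : ℝ}
  {p : V → V} {i j k : V}

theorem rev (h : Cfg G m lam s p i j k) : Cfg G m lam s p k j i where
  hij := h.hjk.symm
  hik := h.hik.symm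
  hjk := h.hij.symm
  pi := h.pk
  pj := h.pj
  pk := h.pi
  hp := fun v h1 h2 h3 => ⟨by have := (h.hp v h3 h2 h1).1; tauto, (h.hp v h3 h2 h1).2⟩
  card := by have := h.card; omega
  hm := h.hm
  spec := h.spec
  conn := h.conn
  hl := h.hl
  hs := h.hs
  hss := h.hss
  hlt := h.hlt
  hkey := h.hkey

theorem swp (h : Cfg G m lam s p i j k) : Cfg G m lam s p j i k where
  hij := h.hij.symm
  hik := h.hjk
  hjk := h.hik
  pi := h.pj
  pj := h.pi
  pk := h.pk
  hp := fun v h1 h2 h3 => ⟨by have := (h.hp v h2 h1 h3).1; tauto, (h.hp v h2 h1 h3).2⟩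
  card := by have := h.card; omega
  hm := h.hm
  spec := h.spec
  conn := h.conn
  hl := h.hl
  hs := h.hs
  hss := h.hss
  hlt := h.hlt
  hkey := h.hkey

theorem bound (h : Cfg G m lam s p i j k) (ai aj ak : ℝ) (hai : 0 ≤ ai) (haj : 0 ≤ aj)
    (hak : 0 ≤ ak) (f : V → ℝ) (hf : ∀ v, 0 ≤ f v) (S : ℝ) (hS : ∑ v, f v ^ 2 ≤ S)
    (E : Finset (V × V)) (hE : ∀ e ∈ E, G.Adj e.1 e.2) (hE2 : ∀ e ∈ E, (e.2, e.1) ∉ E)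
    (hE3 : ∀ e ∈ E, p e.1 ≠ p e.2) :
    ai ^ 2 * (dg p i - lam ^ 2) + aj ^ 2 * (dg p j - lam ^ 2) + ak ^ 2 * (dg p k - lam ^ 2) - S
      + 2 * lam * ∑ e ∈ E, tVec {i, j, k} p lam (aV i j ai aj ak) f e.1
        * tVec {i, j, k} p lam (aV i j ai aj ak) f e.2
      ≤ lam * qForm G lam (tVec {i, j, k} p lam (aV i j ai aj ak) f) := by
  have hl : 0 < lam := by have := h.hl; linarith
  have ha : ∀ v, 0 ≤ aV i j ai aj ak v := by
    intro v
    unfold aV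
    split_ifs <;> assumption
  have hpD : ∀ v ∉ ({i, j, k} : Finset V), p v ∈ ({i, j, k} : Finset V) ∧ G.Adj (p v) v := by
    intro v hv
    simp only [Finset.mem_insert, Finset.mem_singleton, not_or] at hv ⊢
    exact h.hp v hv.1 hv.2.1 hv.2.2
  have hpp : ∀ v, p (p v) = p v := by
    intro v
    by_cases h1 : v = i
    · rw [h1, h.pi, h.pi]
    by_cases h2 : v = j
    · rw [h2, h.pj, h.pj]
    by_cases h3 : v = k
    · rw [h3, h.pk, h.pk]
    rcases (h.hp v h1 h2 h3).1 with h4 | h4 | h4 <;> rw [h4]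
    exacts [h.pi, h.pj, h.pk]
  have key := star_bound G lam hl {i, j, k} p hpD E hE hE2
    (fun e he => ⟨fun h' => hE3 e he (by rw [h'.2, hpp]), fun h' => hE3 e he (by rw [h'.2, hpp])⟩)
    (aV i j ai aj ak) f ha hf
  have hd : ∀ c ∈ ({i, j, k} : Finset V),
      (({i, j, k} : Finset V)ᶜ.filter (fun v => p v = c)).card = dg p c := by
    intro c hc
    unfold dg
    congr 1
    ext v
    simp only [Finset.mem_filter, Finset.mem_compl, Finset.mem_univ, true_and]
    constructor
    · rintro ⟨h1, h2⟩
      exact ⟨h2, fun h3 => h1 (h3 ▸ hc)⟩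
    · rintro ⟨h1, h2⟩
      refine ⟨fun h3 => h2 ?_, h1⟩
      simp only [Finset.mem_insert, Finset.mem_singleton] at h3
      rcases h3 with rfl | rfl | rfl
      · rw [← h1, h.pi]
      · rw [← h1, h.pj]
      · rw [← h1, h.pk]
  rw [Finset.sum_congr rfl (fun c hc => by rw [hd c hc]),
    Finset.sum_insert (by simp [h.hij, h.hik]), Finset.sum_insert (by simp [h.hjk]),
    Finset.sum_singleton] at key
  have e1 : aV i j ai aj ak i = ai := by simp [aV]
  have e2 : aV i j ai aj ak j = aj := by simp [aV, h.hij.symm]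
  have e3 : aV i j ai aj ak k = ak := by simp [aV, h.hik.symm, h.hjk.symm]
  rw [e1, e2, e3] at key
  linarith

theorem bound' (h : Cfg G m lam s p i j k) (ai aj ak : ℝ) (hai : 0 ≤ ai) (haj : 0 ≤ aj)
    (hak : 0 ≤ ak) (f : V → ℝ) (hf : ∀ v, 0 ≤ f v) (S : ℝ) (hS : ∑ v, f v ^ 2 ≤ S)
    (E : Finset (V × V)) (hE : ∀ e ∈ E, G.Adj e.1 e.2) (hE2 : ∀ e ∈ E, (e.2, e.1) ∉ E)
    (hE3 : ∀ e ∈ E, p e.1 ≠ p e.2) :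
    ai ^ 2 * (dg p i - lam ^ 2) + aj ^ 2 * (dg p j - lam ^ 2) + ak ^ 2 * (dg p k - lam ^ 2) - S
      + 2 * lam * ∑ e ∈ E, tVec {i, j, k} p lam (aV i j ai aj ak) f e.1
        * tVec {i, j, k} p lam (aV i j ai aj ak) f e.2 ≤ 0 := by
  have h1 := h.bound ai aj ak hai haj hak f hf S hS E hE hE2 hE3
  have h2 := qForm_nonpos G h.spec (tVec {i, j, k} p lam (aV i j ai aj ak) f)
  have h3 := h.hl
  nlinarith

/-- If the third centre has weight zero then the form is strictly negative. -/
theorem bound0 (h : Cfg G m lam s p i j k) (ai aj : ℝ) (hai : 0 < ai) (haj : 0 ≤ aj)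
    (f : V → ℝ) (hf : ∀ v, 0 ≤ f v) (S : ℝ) (hS : ∑ v, f v ^ 2 ≤ S)
    (E : Finset (V × V)) (hE : ∀ e ∈ E, G.Adj e.1 e.2) (hE2 : ∀ e ∈ E, (e.2, e.1) ∉ E)
    (hE3 : ∀ e ∈ E, p e.1 ≠ p e.2) :
    ai ^ 2 * (dg p i - lam ^ 2) + aj ^ 2 * (dg p j - lam ^ 2) - S
      + 2 * lam * ∑ e ∈ E, tVec {i, j, k} p lam (aV i j ai aj 0) f e.1
        * tVec {i, j, k} p lam (aV i j ai aj 0) f e.2 < 0 := by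
  have h1 := h.bound ai aj 0 hai.le haj le_rfl f hf S hS E hE hE2 hE3
  by_contra hcon
  push Not at hcon
  have hl := h.hl
  have h2 : 0 ≤ lam * qForm G lam (tVec {i, j, k} p lam (aV i j ai aj 0) f) := by
    linarith
  have h3 := nonneg_of_mul_nonneg_right h2 (by linarith)
  have hx0 : ∀ v, 0 ≤ tVec {i, j, k} p lam (aV i j ai aj 0) f v := by
    have ha : ∀ v, 0 ≤ aV i j ai aj 0 v := by
      intro v
      unfold aV
      split_ifs <;> linarith
    intro v
    unfold tVec
    split_ifs
    · exact ha v
    · exact div_nonneg (add_nonneg (ha _) (hf _)) (by linarith)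
  have h4 := pos_of_qForm_zero G h.spec h.conn _ hx0 h3 k
    (by simp [tVec, aV, h.hik.symm, h.hjk.symm]) i
  simp [tVec, aV] at h4
  linarith

theorem tV_i (ai aj ak : ℝ) (f : V → ℝ) : tVec {i, j, k} p lam (aV i j ai aj ak) f i = ai := by
  simp [tVec, aV]

theorem tV_j (h : Cfg G m lam s p i j k) (ai aj ak : ℝ) (f : V → ℝ) :
    tVec {i, j, k} p lam (aV i j ai aj ak) f j = aj := by
  simp [tVec, aV, h.hij.symm]

/-- `v` is not a centre. -/
def lf (i j k v : V) : Prop := v ≠ i ∧ v ≠ j ∧ v ≠ k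

theorem tV_li (ai aj ak : ℝ) (f : V → ℝ) {v : V} (hv : lf i j k v) (hpv : p v = i) :
    tVec {i, j, k} p lam (aV i j ai aj ak) f v = (ai + f v) / lam := by
  simp [tVec, aV, hv.1, hv.2.1, hv.2.2, hpv]

theorem tV_lj (h : Cfg G m lam s p i j k) (ai aj ak : ℝ) (f : V → ℝ) {v : V} (hv : lf i j k v)
    (hpv : p v = j) :
    tVec {i, j, k} p lam (aV i j ai aj ak) f v = (aj + f v) / lam := by
  simp [tVec, aV, hv.1, hv.2.1, hv.2.2, hpv, h.hij.symm]

theorem tV_lk (h : Cfg G m lam s p i j k) (ai aj ak : ℝ) (f : V → ℝ) {v : V} (hv : lf i j k v)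
    (hpv : p v = k) :
    tVec {i, j, k} p lam (aV i j ai aj ak) f v = (ak + f v) / lam := by
  simp [tVec, aV, hv.1, hv.2.1, hv.2.2, hpv, h.hik.symm, h.hjk.symm]

theorem dg_le (h : Cfg G m lam s p i j k) : dg p i ≤ m := by
  have h1 := h.bound' 1 0 0 zero_le_one le_rfl le_rfl (fun _ => 0) (fun _ => le_rfl) 0 (by simp)
    ∅ (by simp) (by simp) (by simp)
  rw [h.hlt] at h1
  simp only [Finset.sum_empty] at h1
  have h2 := h.hss
  have h3 := h.hs
  have h4 : (dg p i : ℝ) < m + 1 := by nlinarith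
  have : dg p i < m + 1 := by exact_mod_cast h4
  omega

theorem one_link (h : Cfg G m lam s p i j k) (ai aj : ℝ) (hai : 0 < ai) (haj : 0 ≤ aj)
    (f : V → ℝ) (hf : ∀ v, 0 ≤ f v) (S : ℝ) (hS : ∑ v, f v ^ 2 ≤ S) (u v : V)
    (huv : G.Adj u v) (hpuv : p u ≠ p v) :
    ai ^ 2 * (dg p i - lam ^ 2) + aj ^ 2 * (dg p j - lam ^ 2) - S
      + 2 * lam * (tVec {i, j, k} p lam (aV i j ai aj 0) f u
        * tVec {i, j, k} p lam (aV i j ai aj 0) f v) < 0 := by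
  have h1 := h.bound0 ai aj hai haj f hf S hS {(u, v)} (by simpa using huv)
    (by simp only [Finset.mem_singleton, forall_eq, Prod.mk.injEq, not_and]
        intro hh; exact absurd (hh ▸ rfl) hpuv) (by simpa using hpuv)
  simpa using h1

theorem no_cc (h : Cfg G m lam s p i j k) : ¬ G.Adj i j := by
  intro hadj
  have h1 := h.one_link 1 1 one_pos zero_le_one (fun _ => 0) (fun _ => le_rfl) 0 (by simp)
    i j hadj (by rw [h.pi, h.pj]; exact h.hij)
  rw [tV_i, h.tV_j, h.hlt] at h1
  have h2 : dg p k ≤ m := h.rev.dg_le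
  have h3 := h.card
  have h4 : m ≤ dg p i + dg p j + 2 - m := by omega
  have h5 : (2:ℝ) * m ≤ dg p i + dg p j + 2 := by
    have : 2 * m ≤ dg p i + dg p j + 2 := by omega
    exact_mod_cast this
  have := h.hl
  have := h.hss
  have := h.hs
  nlinarith

theorem no_cl (h : Cfg G m lam s p i j k) (v : V) (hv : lf i j k v) (hpv : p v = j) :
    ¬ G.Adj i v := by
  intro hadj
  have key : ∀ ai aj : ℝ, 0 < ai → 0 ≤ aj →
      ai ^ 2 * (dg p i - (m + s)) + aj ^ 2 * (dg p j - (m + s)) - ai ^ 2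
        + 2 * ai * (aj + ai) < 0 := by
    intro ai aj h1 h2
    have h3 := h.one_link ai aj h1 h2 (fun z => if z = v then ai else 0)
      (fun z => by split_ifs <;> linarith) (ai ^ 2) (by simp [ite_pow]) i v hadj
      (by rw [h.pi, hpv]; exact h.hij)
    rw [tV_i, h.tV_lj _ _ _ _ hv hpv, h.hlt] at h3
    simp only [if_true] at h3
    have hl := h.hl
    have : 2 * lam * (ai * ((aj + ai) / lam)) = 2 * ai * (aj + ai) := by
      field_simp
    linarith
  have hc := h.card
  have hi := h.dg_le
  have hj : dg p j ≤ m := h.swp.dg_le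
  have hk : dg p k ≤ m := h.rev.dg_le
  have hss := h.hss
  have hs := h.hs
  by_cases c0 : dg p i = m
  · have := key 1 0 one_pos le_rfl
    rw [c0] at this
    nlinarith
  by_cases c1 : dg p i + 1 = m
  · have c2 : m ≤ dg p j + 1 := by omega
    have c1' : (dg p i : ℝ) + 1 = m := by exact_mod_cast c1
    have c2' : (m : ℝ) ≤ dg p j + 1 := by exact_mod_cast c2
    have := key 1 s one_pos hs.le
    have e : s ^ 2 * ((m : ℝ) - 1) ≤ s ^ 2 * dg p j :=
      mul_le_mul_of_nonneg_left (by linarith) (sq_nonneg s)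
    nlinarith
  · have c2 : dg p i + 2 = m := by omega
    have c3 : dg p j = m := by omega
    have c2' : (dg p i : ℝ) = m - 2 := by rw [← c2]; push_cast; ring
    have := key s 1 hs zero_le_one
    rw [c2', c3] at this
    nlinarith

end Cfg

/-- Perturbation supported on four vertices. -/
def fV {V : Type*} [DecidableEq V] (u v v' w : V) (fu fv fv' fw : ℝ) : V → ℝ :=
  fun z => if z = u then fu else if z = v then fv else if z = v' then fv' else
    if z = w then fw else 0

theorem fV_nonneg {V : Type*} [DecidableEq V] (u v v' w : V) {fu fv fv' fw : ℝ} (h1 : 0 ≤ fu)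
    (h2 : 0 ≤ fv) (h3 : 0 ≤ fv') (h4 : 0 ≤ fw) (z : V) : 0 ≤ fV u v v' w fu fv fv' fw z := by
  unfold fV
  split_ifs <;> first | assumption | exact le_rfl

theorem fV_sum {V : Type*} [Fintype V] [DecidableEq V] (u v v' w : V) (fu fv fv' fw : ℝ) :
    ∑ z, fV u v v' w fu fv fv' fw z ^ 2 ≤ fu ^ 2 + fv ^ 2 + fv' ^ 2 + fw ^ 2 := by
  calc ∑ z, fV u v v' w fu fv fv' fw z ^ 2
      ≤ ∑ z, ((if z = u then fu ^ 2 else 0) + (if z = v then fv ^ 2 else 0)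
        + (if z = v' then fv' ^ 2 else 0) + (if z = w then fw ^ 2 else 0)) := by
        refine Finset.sum_le_sum fun z _ => ?_
        have h1 := sq_nonneg fu
        have h2 := sq_nonneg fv
        have h3 := sq_nonneg fv'
        have h4 := sq_nonneg fw
        unfold fV
        split_ifs <;> nlinarith
    _ = _ := by simp [Finset.sum_add_distrib]

namespace Cfg

variable {V : Type*} [Fintype V] [DecidableEq V] {G : SimpleGraph V} {m : ℕ} {lam s : ℝ}
  {p : V → V} {i j k : V}

theorem two_link (h : Cfg G m lam s p i j k) (ai aj ak : ℝ) (hai : 0 ≤ ai) (haj : 0 ≤ aj)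
    (hak : 0 ≤ ak) (f : V → ℝ) (hf : ∀ v, 0 ≤ f v) (S : ℝ) (hS : ∑ v, f v ^ 2 ≤ S) {u v v' w : V}
    (hu : lf i j k u) (hv : lf i j k v) (hv' : lf i j k v') (hw : lf i j k w)
    (pu : p u = i) (pv : p v = j) (pv' : p v' = j) (pw : p w = k)
    (huv : G.Adj u v) (hvw : G.Adj v' w) :
    ai ^ 2 * (dg p i - (m + s)) + aj ^ 2 * (dg p j - (m + s)) + ak ^ 2 * (dg p k - (m + s)) - S
      + 2 / lam * ((ai + f u) * (aj + f v) + (aj + f v') * (ak + f w)) ≤ 0 := by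
  have hij := h.hij
  have hik := h.hik
  have hjk := h.hjk
  have ne1 : u ≠ v := fun e => hij (by rw [← pu, ← pv, e])
  have ne2 : u ≠ w := fun e => hik (by rw [← pu, ← pw, e])
  have ne3 : v' ≠ w := fun e => hjk (by rw [← pv', ← pw, e])
  have ne4 : u ≠ v' := fun e => hij (by rw [← pu, ← pv', e])
  have h1 := h.bound' ai aj ak hai haj hak f hf S hS {(u, v), (v', w)}
    (by simp [huv, hvw])
    (by simp only [Finset.mem_insert, Finset.mem_singleton]
        rintro e (rfl | rfl) <;> simp [ne1, ne1.symm, ne2, ne2.symm, ne3, ne3.symm])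
    (by simp only [Finset.mem_insert, Finset.mem_singleton]
        rintro e (rfl | rfl) <;> simp [pu, pv, pv', pw, hij, hjk])
  rw [Finset.sum_pair (by simp [ne4]), tV_li _ _ _ _ hu pu, h.tV_lj _ _ _ _ hv pv,
    h.tV_lj _ _ _ _ hv' pv', h.tV_lk _ _ _ _ hw pw, h.hlt] at h1
  have hl := h.hl
  have e : 2 * lam * ((ai + f u) / lam * ((aj + f v) / lam)
      + (aj + f v') / lam * ((ak + f w) / lam))
      = 2 / lam * ((ai + f u) * (aj + f v) + (aj + f v') * (ak + f w)) := by
    field_simp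
  linarith

theorem no_ll00 (h : Cfg G m lam s p i j k) {u v : V}
    (hu : lf i j k u) (hv : lf i j k v) (pu : p u = i) (pv : p v = j) (huv : G.Adj u v)
    (di : dg p i = m) (dj : dg p j = m) : False := by
  have hl := h.hl
  have hs := h.hs
  have hss := h.hss
  have hkey := h.hkey
  have ne1 : u ≠ v := fun e => h.hij (by rw [← pu, ← pv, e])
  have h1 := h.one_link (lam - 1) (lam - 1) (by linarith) (by linarith)
    (fV u v v v 1 1 0 0) (fV_nonneg _ _ _ _ zero_le_one zero_le_one le_rfl le_rfl)
    _ (fV_sum _ _ _ _ _ _ _ _) u v huv (by rw [pu, pv]; exact h.hij)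
  rw [tV_li _ _ _ _ hu pu, h.tV_lj _ _ _ _ hv pv, h.hlt, di, dj] at h1
  have e1 : fV u v v v 1 1 0 0 u = 1 := by simp [fV]
  have e2 : fV u v v v 1 1 0 0 v = 1 := by simp [fV, ne1.symm]
  rw [e1, e2] at h1
  have e3 : 2 * lam * ((lam - 1 + 1) / lam * ((lam - 1 + 1) / lam)) = 2 * lam := by
    field_simp; ring
  rw [e3] at h1
  have h2 : s * (lam ^ 2 - 1) < 3 := by
    by_contra hc
    push Not at hc
    nlinarith
  have h3 : s * (lam - 1) < 1 := by
    by_contra hc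
    push Not at hc
    nlinarith
  nlinarith

theorem ts (h : Cfg G m lam s p i j k) : s * lam ^ 2 * (s + 2) = (1 + s) * (s + 4) := by
  have := h.hkey
  nlinarith

theorem no_101 (h : Cfg G m lam s p i j k) {u v v' w : V}
    (hu : lf i j k u) (hv : lf i j k v) (hv' : lf i j k v') (hw : lf i j k w)
    (pu : p u = i) (pv : p v = j) (pv' : p v' = j) (pw : p w = k)
    (huv : G.Adj u v) (hvw : G.Adj v' w)
    (di : dg p i + 1 = m) (dj : dg p j = m) (dk : dg p k + 1 = m) : False := by
  have hl := h.hl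
  have hs := h.hs
  have hss := h.hss
  have ts := h.ts
  have hij := h.hij
  have hik := h.hik
  have hjk := h.hjk
  have ne1 : u ≠ v := fun e => hij (by rw [← pu, ← pv, e])
  have ne2 : u ≠ w := fun e => hik (by rw [← pu, ← pw, e])
  have ne3 : v' ≠ w := fun e => hjk (by rw [← pv', ← pw, e])
  have ne4 : u ≠ v' := fun e => hij (by rw [← pu, ← pv', e])
  have ne5 : v ≠ w := fun e => hjk (by rw [← pv, ← pw, e])
  have h1 := h.two_link (2/3) lam (2/3) (by norm_num) (by linarith) (by norm_num)
    (fV u w w w 1 1 0 0) (fV_nonneg _ _ _ _ zero_le_one zero_le_one le_rfl le_rfl)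
    _ (fV_sum _ _ _ _ _ _ _ _) hu hv hv' hw pu pv pv' pw huv hvw
  have e1 : fV u w w w 1 1 0 0 u = 1 := by simp [fV]
  have e2 : fV u w w w 1 1 0 0 w = 1 := by simp [fV, ne2.symm]
  have e3 : fV u w w w 1 1 0 0 v = 0 := by simp [fV, ne1.symm, ne5]
  have e4 : fV u w w w 1 1 0 0 v' = 0 := by simp [fV, ne4.symm, ne3]
  have di' : (dg p i : ℝ) = m - 1 := by rw [← di]; push_cast; ring
  have dk' : (dg p k : ℝ) = m - 1 := by rw [← dk]; push_cast; ring
  rw [e1, e2, e3, e4, di', dk', dj] at h1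
  have e5 : 2 / lam * ((2 / 3 + 1) * (lam + 0) + (lam + 0) * (2 / 3 + 1)) = 20 / 3 := by
    field_simp; ring
  rw [e5] at h1
  have h2 : 14 / 3 - 8 / 9 * (1 + s) ≤ s * lam ^ 2 := by nlinarith
  nlinarith

theorem no_011_path (h : Cfg G m lam s p i j k) {u v v' w : V}
    (hu : lf i j k u) (hv : lf i j k v) (hv' : lf i j k v') (hw : lf i j k w)
    (pu : p u = i) (pv : p v = j) (pv' : p v' = j) (pw : p w = k)
    (huv : G.Adj u v) (hvw : G.Adj v' w) (hne : v ≠ v')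
    (di : dg p i = m) (dj : dg p j + 1 = m) (dk : dg p k + 1 = m) : False := by
  have hl := h.hl
  have hs := h.hs
  have hss := h.hss
  have ts := h.ts
  have hij := h.hij
  have hik := h.hik
  have hjk := h.hjk
  have ne1 : u ≠ v := fun e => hij (by rw [← pu, ← pv, e])
  have ne2 : u ≠ w := fun e => hik (by rw [← pu, ← pw, e])
  have ne3 : v' ≠ w := fun e => hjk (by rw [← pv', ← pw, e])
  have ne4 : u ≠ v' := fun e => hij (by rw [← pu, ← pv', e])
  have ne5 : v ≠ w := fun e => hjk (by rw [← pv, ← pw, e])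
  have hl0 : 0 < lam := by linarith
  have h1 := h.two_link lam 1 (1 / lam) (by linarith) zero_le_one (by positivity)
    (fV u v v' w ((2 + s) / lam) (1 + s) s ((1 + s) / lam))
    (fV_nonneg _ _ _ _ (by positivity) (by positivity) (by positivity) (by positivity))
    _ (fV_sum _ _ _ _ _ _ _ _) hu hv hv' hw pu pv pv' pw huv hvw
  have e1 : fV u v v' w ((2 + s) / lam) (1 + s) s ((1 + s) / lam) u = (2 + s) / lam := by
    simp [fV]
  have e2 : fV u v v' w ((2 + s) / lam) (1 + s) s ((1 + s) / lam) w = (1 + s) / lam := by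
    simp [fV, ne2.symm, ne5.symm, ne3.symm]
  have e3 : fV u v v' w ((2 + s) / lam) (1 + s) s ((1 + s) / lam) v = 1 + s := by
    simp [fV, ne1.symm]
  have e4 : fV u v v' w ((2 + s) / lam) (1 + s) s ((1 + s) / lam) v' = s := by
    simp [fV, ne4.symm, hne.symm]
  have dj' : (dg p j : ℝ) = m - 1 := by rw [← dj]; push_cast; ring
  have dk' : (dg p k : ℝ) = m - 1 := by rw [← dk]; push_cast; ring
  rw [e1, e2, e3, e4, dj', dk', di] at h1
  set t := lam ^ 2 with ht
  have ht0 : 0 < t := by positivity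
  have e5 : lam ^ 2 * ((m : ℝ) - (m + s)) + 1 ^ 2 * ((m : ℝ) - 1 - (m + s))
      + (1 / lam) ^ 2 * ((m : ℝ) - 1 - (m + s))
      - (((2 + s) / lam) ^ 2 + (1 + s) ^ 2 + s ^ 2 + ((1 + s) / lam) ^ 2)
      + 2 / lam * ((lam + (2 + s) / lam) * (1 + (1 + s)) + (1 + s) * (1 / lam + (1 + s) / lam))
      = - (s * t) - (1 + s) + 2 * (2 + s) - (1 + s) ^ 2 - s ^ 2
        + ((2 + s) ^ 2 + (1 + s) ^ 2 + (1 + s)) / t := by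
    rw [ht]
    field_simp
    ring
  rw [e5] at h1
  have hst : s * t = (1 + s) * (s + 4) / (s + 2) := by
    field_simp; linarith
  have hti : 1 / t = s * (s + 2) / ((1 + s) * (s + 4)) := by
    field_simp; linarith
  rw [div_eq_mul_one_div _ t, hti, hst] at h1
  have e6 : -((1 + s) * (s + 4) / (s + 2)) - (1 + s) + 2 * (2 + s) - (1 + s) ^ 2 - s ^ 2 +
        ((2 + s) ^ 2 + (1 + s) ^ 2 + (1 + s)) * (s * (s + 2) / ((1 + s) * (s + 4)))
     = (-((1 + s) * (s + 4)) * ((1 + s) * (s + 4))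
        + (- (1 + s) + 2 * (2 + s) - (1 + s) ^ 2 - s ^ 2) * ((s + 2) * ((1 + s) * (s + 4)))
        + ((2 + s) ^ 2 + (1 + s) ^ 2 + (1 + s)) * (s * (s + 2) ^ 2))
        / ((s + 2) * ((1 + s) * (s + 4))) := by
    field_simp
    ring
  rw [e6] at h1
  have h2 := (div_le_iff₀ (by positivity)).1 h1
  have hs1 : s < 1 := by nlinarith
  have h3 : 0 < s * ((1 - s) * (s + 1) ^ 2 + 2 * s + 3) := by
    have : 0 < 1 - s := by linarith
    positivity
  nlinarith

theorem no_011_spider (h : Cfg G m lam s p i j k) {u v w : V}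
    (hu : lf i j k u) (hv : lf i j k v) (hw : lf i j k w)
    (pu : p u = i) (pv : p v = j) (pw : p w = k)
    (huv : G.Adj u v) (hvw : G.Adj v w)
    (di : dg p i = m) (dj : dg p j + 1 = m) : False := by
  have hl := h.hl
  have hs := h.hs
  have hss := h.hss
  have ts := h.ts
  have hij := h.hij
  have hik := h.hik
  have hjk := h.hjk
  have ne1 : u ≠ v := fun e => hij (by rw [← pu, ← pv, e])
  have ne2 : u ≠ w := fun e => hik (by rw [← pu, ← pw, e])
  have ne5 : v ≠ w := fun e => hjk (by rw [← pv, ← pw, e])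
  have hl0 : 0 < lam := by linarith
  have h1 := h.two_link lam 1 0 (by linarith) zero_le_one le_rfl
    (fV u v w w (2 / lam) 1 (2 / lam) 0)
    (fV_nonneg _ _ _ _ (by positivity) (by positivity) (by positivity) (by positivity))
    _ (fV_sum _ _ _ _ _ _ _ _) hu hv hv hw pu pv pv pw huv hvw
  have e1 : fV u v w w (2 / lam) 1 (2 / lam) 0 u = 2 / lam := by
    simp [fV]
  have e2 : fV u v w w (2 / lam) 1 (2 / lam) 0 w = 2 / lam := by
    simp [fV, ne2.symm, ne5.symm]
  have e3 : fV u v w w (2 / lam) 1 (2 / lam) 0 v = 1 := by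
    simp [fV, ne1.symm]
  have dj' : (dg p j : ℝ) = m - 1 := by rw [← dj]; push_cast; ring
  rw [e1, e2, e3, dj', di] at h1
  set t := lam ^ 2 with ht
  have ht0 : 0 < t := by positivity
  have e5 : lam ^ 2 * ((m : ℝ) - (m + s)) + 1 ^ 2 * ((m : ℝ) - 1 - (m + s))
      + 0 ^ 2 * ((dg p k : ℝ) - (m + s))
      - ((2 / lam) ^ 2 + 1 ^ 2 + (2 / lam) ^ 2 + 0 ^ 2)
      + 2 / lam * ((lam + 2 / lam) * (1 + 1) + (1 + 1) * (0 + 2 / lam))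
      = 2 - s - s * t + 8 / t := by
    rw [ht]
    field_simp
    ring
  rw [e5] at h1
  have hst : s * t = (1 + s) * (s + 4) / (s + 2) := by
    field_simp; linarith
  have hti : 1 / t = s * (s + 2) / ((1 + s) * (s + 4)) := by
    field_simp; linarith
  rw [div_eq_mul_one_div _ t, hti, hst] at h1
  have e6 : 2 - s - (1 + s) * (s + 4) / (s + 2) + 8 * (s * (s + 2) / ((1 + s) * (s + 4)))
     = ((2 - s) * ((s + 2) * ((1 + s) * (s + 4))) - ((1 + s) * (s + 4)) ^ 2
        + 8 * (s * (s + 2) ^ 2)) / ((s + 2) * ((1 + s) * (s + 4))) := by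
    field_simp
  rw [e6] at h1
  have h2 := (div_le_iff₀ (by positivity)).1 h1
  have hs1 : s < 1 := by nlinarith
  have h3 : 0 < s * (2 * (1 - s ^ 3) + 7 * (1 - s ^ 2) + (1 - s) + 2) := by
    have h4 : 0 < 1 - s := by linarith
    have h5 : 0 ≤ 1 - s ^ 2 := by nlinarith
    have h6 : 0 ≤ 1 - s ^ 3 := by nlinarith
    positivity
  nlinarith

theorem no_020_spider (h : Cfg G m lam s p i j k) {u v w : V}
    (hu : lf i j k u) (hv : lf i j k v) (hw : lf i j k w)
    (pu : p u = i) (pv : p v = j) (pw : p w = k)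
    (huv : G.Adj u v) (hvw : G.Adj v w)
    (di : dg p i = m) (dj : dg p j + 2 = m) (dk : dg p k = m) : False := by
  have hl := h.hl
  have hs := h.hs
  have hss := h.hss
  have ts := h.ts
  have hij := h.hij
  have hik := h.hik
  have hjk := h.hjk
  have ne1 : u ≠ v := fun e => hij (by rw [← pu, ← pv, e])
  have ne2 : u ≠ w := fun e => hik (by rw [← pu, ← pw, e])
  have ne5 : v ≠ w := fun e => hjk (by rw [← pv, ← pw, e])
  have hl0 : 0 < lam := by linarith
  set t := lam ^ 2 with ht
  have ht0 : 0 < t := by positivity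
  obtain ⟨K, hK⟩ : ∃ K, K = s * (t - 1) - 1 := ⟨_, rfl⟩
  have hK1 : K * (s + 2) = 2 * (1 + s) := by rw [hK]; nlinarith
  have hK2 : s * t = K + 1 + s := by rw [hK]; ring
  have hK0 : 0 < K := by
    by_contra hc
    push Not at hc
    nlinarith
  have h1 := h.two_link lam K lam (by linarith) hK0.le (by linarith)
    (fV u v w w (s * lam) (1 + s) (s * lam) 0)
    (fV_nonneg _ _ _ _ (by positivity) (by positivity) (by positivity) (by positivity))
    _ (fV_sum _ _ _ _ _ _ _ _) hu hv hv hw pu pv pv pw huv hvw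
  have e1 : fV u v w w (s * lam) (1 + s) (s * lam) 0 u = s * lam := by
    simp [fV]
  have e2 : fV u v w w (s * lam) (1 + s) (s * lam) 0 w = s * lam := by
    simp [fV, ne2.symm, ne5.symm]
  have e3 : fV u v w w (s * lam) (1 + s) (s * lam) 0 v = 1 + s := by
    simp [fV, ne1.symm]
  have dj' : (dg p j : ℝ) = m - 2 := by rw [← dj]; push_cast; ring
  rw [e1, e2, e3, dj', di, dk] at h1
  have e5 : 2 / lam * ((lam + s * lam) * (K + (1 + s)) + (K + (1 + s)) * (lam + s * lam))
      = 4 * (1 + s) * (K + (1 + s)) := by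
    field_simp; ring
  rw [e5, ← ht, mul_pow, ← ht] at h1
  have h2 : - 2 * (s * t) * (1 + s) - K ^ 2 * (2 + s) - (1 + s) ^ 2
      + 4 * (1 + s) * (K + (1 + s)) ≤ 0 := by nlinarith
  rw [hK2] at h2
  nlinarith

end Cfg

/-- The positive eigenvector of the extremal tree. -/
noncomputable def yV (a b c : ℕ) (lam s K : ℝ) : Fin 7 ⊕ (Fin a ⊕ Fin b ⊕ Fin c) → ℝ
  | Sum.inl n => (![lam, 1 + s, lam * s, K, lam * s, 1 + s, lam] : Fin 7 → ℝ) n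
  | Sum.inr (Sum.inl _) => 1
  | Sum.inr (Sum.inr (Sum.inl _)) => K / lam
  | Sum.inr (Sum.inr (Sum.inr _)) => 1

theorem yV_pos (a b c : ℕ) {lam s K : ℝ} (hl : 0 < lam) (hs : 0 < s) (hK : 0 < K)
    (v : Fin 7 ⊕ (Fin a ⊕ Fin b ⊕ Fin c)) : 0 < yV a b c lam s K v := by
  rcases v with n | n | n | n
  · fin_cases n <;> simp [yV] <;> positivity
  all_goals simp only [yV]; positivity

set_option maxHeartbeats 1600000 in
theorem yV_eigen (a b c : ℕ) {lam s K : ℝ} (hl : 0 < lam) (h1 : lam ^ 2 = a + 1 + s)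
    (h2 : lam ^ 2 = b + 4 + s) (h3 : (c : ℝ) = a) (hK1 : lam ^ 2 * s = K + 1 + s)
    (hK2 : K * (s + 4) = 2 * lam ^ 2 * s) (v : Fin 7 ⊕ (Fin a ⊕ Fin b ⊕ Fin c)) :
    ∑ w, adjMat (G2graph a b c) v w * yV a b c lam s K w = lam * yV a b c lam s K v := by
  simp only [Fintype.sum_sum_type, Fin.sum_univ_seven]
  rcases v with n | n | n | n
  · fin_cases n
    · simp [adjMat, G2graph, yV]
      nlinarith
    · simp [adjMat, G2graph, yV]
      try nlinarith
    · simp [adjMat, G2graph, yV]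
      nlinarith
    · simp [adjMat, G2graph, yV]
      field_simp
      linear_combination (-1) * hK2 - K * h2
    · simp [adjMat, G2graph, yV]
      nlinarith
    · simp [adjMat, G2graph, yV]
      try nlinarith
    · simp [adjMat, G2graph, yV]
      nlinarith
  · simp [adjMat, G2graph, yV]
  · simp [adjMat, G2graph, yV]
    field_simp
  · simp [adjMat, G2graph, yV]

theorem qForm_eigen {V : Type*} [Fintype V] (G : SimpleGraph V) {lam : ℝ} (y : V → ℝ)
    (he : ∀ v, ∑ w, adjMat G v w * y w = lam * y v) : qForm G lam y = 0 := by
  unfold qForm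
  have : ∀ v, ∑ w, adjMat G v w * (y v * y w) = lam * y v ^ 2 := by
    intro v
    calc _ = y v * ∑ w, adjMat G v w * y w := by
          rw [Finset.mul_sum]; exact Finset.sum_congr rfl fun w _ => by ring
      _ = _ := by rw [he]; ring
  simp only [this, Finset.mul_sum, sub_self]

theorem eq_of_le_of_eigen {V : Type*} [Fintype V] [DecidableEq V] (H G : SimpleGraph V) {lam : ℝ}
    (hle : H ≤ G) (y : V → ℝ) (hy : ∀ v, 0 < y v)
    (he : ∀ v, ∑ w, adjMat H v w * y w = lam * y v) (hG : specRad G ≤ lam) : H = G := by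
  refine le_antisymm hle ?_
  intro u w huw
  by_contra hn
  have h1 := qForm_eigen H y he
  have h2 := qForm_nonpos G hG y
  have hAB : ∀ a b, adjMat H a b ≤ adjMat G a b := by
    intro a b
    by_cases hab : H.Adj a b
    · rw [adjMat_adj hab, adjMat_adj (hle hab)]
    · rw [adjMat_not hab]; exact adjMat_nonneg _ _ _
  have hle' : ∀ a b, adjMat H a b * (y a * y b) ≤ adjMat G a b * (y a * y b) := fun a b =>
    mul_le_mul_of_nonneg_right (hAB a b) (mul_pos (hy a) (hy b)).le
  have h3 : ∑ v, ∑ w, adjMat H v w * (y v * y w) < ∑ v, ∑ w, adjMat G v w * (y v * y w) := by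
    refine Finset.sum_lt_sum (fun a _ => Finset.sum_le_sum fun b _ => hle' a b)
      ⟨u, Finset.mem_univ _, Finset.sum_lt_sum (fun b _ => hle' u b) ⟨w, Finset.mem_univ _, ?_⟩⟩
    rw [adjMat_not hn, adjMat_adj huw]
    have := mul_pos (hy u) (hy w)
    linarith
  unfold qForm at h1 h2
  linarith

theorem G2_le {V : Type*} (G : SimpleGraph V) (a b c : ℕ)
    (φ : Fin 7 ⊕ (Fin a ⊕ Fin b ⊕ Fin c) → V)
    (h0 : G.Adj (φ (Sum.inl 0)) (φ (Sum.inl 1))) (h1 : G.Adj (φ (Sum.inl 1)) (φ (Sum.inl 2)))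
    (h2 : G.Adj (φ (Sum.inl 2)) (φ (Sum.inl 3))) (h3 : G.Adj (φ (Sum.inl 3)) (φ (Sum.inl 4)))
    (h4 : G.Adj (φ (Sum.inl 4)) (φ (Sum.inl 5))) (h5 : G.Adj (φ (Sum.inl 5)) (φ (Sum.inl 6)))
    (h6 : ∀ x, G.Adj (φ (Sum.inl 0)) (φ (Sum.inr (Sum.inl x))))
    (h7 : ∀ x, G.Adj (φ (Sum.inl 3)) (φ (Sum.inr (Sum.inr (Sum.inl x)))))
    (h8 : ∀ x, G.Adj (φ (Sum.inl 6)) (φ (Sum.inr (Sum.inr (Sum.inr x))))) :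
    G2graph a b c ≤ G.comap φ := by
  intro x y hxy
  rw [G2graph, SimpleGraph.fromRel_adj] at hxy
  rw [SimpleGraph.comap_adj]
  rcases hxy.2 with h | h
  · rcases h with ⟨rfl, rfl⟩ | ⟨rfl, rfl⟩ | ⟨rfl, rfl⟩ | ⟨rfl, rfl⟩ | ⟨rfl, rfl⟩ | ⟨rfl, rfl⟩ |
      ⟨z, rfl, rfl⟩ | ⟨z, rfl, rfl⟩ | ⟨z, rfl, rfl⟩
    exacts [h0, h1, h2, h3, h4, h5, h6 z, h7 z, h8 z]
  · rcases h with ⟨rfl, rfl⟩ | ⟨rfl, rfl⟩ | ⟨rfl, rfl⟩ | ⟨rfl, rfl⟩ | ⟨rfl, rfl⟩ | ⟨rfl, rfl⟩ |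
      ⟨z, rfl, rfl⟩ | ⟨z, rfl, rfl⟩ | ⟨z, rfl, rfl⟩
    exacts [h0.symm, h1.symm, h2.symm, h3.symm, h4.symm, h5.symm, (h6 z).symm, (h7 z).symm,
      (h8 z).symm]

namespace Cfg

variable {V : Type*} [Fintype V] [DecidableEq V] {G : SimpleGraph V} {m : ℕ} {lam s : ℝ}
  {p : V → V} {i j k : V}

theorem target (h : Cfg G m lam s p i j k) (hV : Fintype.card V = 3 * m + 1) {u v v' w : V}
    (hu : lf i j k u) (hv : lf i j k v) (hv' : lf i j k v') (hw : lf i j k w)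
    (pu : p u = i) (pv : p v = j) (pv' : p v' = j) (pw : p w = k)
    (huv : G.Adj u v) (hvw : G.Adj v' w) (hne : v ≠ v')
    (di : dg p i = m) (dj : dg p j + 2 = m) (dk : dg p k = m) :
    Nonempty (G ≃g G2graph (m - 1) (m - 4) (m - 1)) := by
  have hm := h.hm
  have adj : ∀ z, lf i j k z → G.Adj (p z) z := fun z hz => (h.hp z hz.1 hz.2.1 hz.2.2).2
  have cA : ((Finset.univ.filter (fun z => p z = i ∧ z ≠ i)).erase u).card = m - 1 := by
    rw [Finset.card_erase_of_mem (by simp [pu, hu.1])]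
    unfold dg at di; omega
  have cC : ((Finset.univ.filter (fun z => p z = k ∧ z ≠ k)).erase w).card = m - 1 := by
    rw [Finset.card_erase_of_mem (by simp [pw, hw.2.2])]
    unfold dg at dk; omega
  have cB : (((Finset.univ.filter (fun z => p z = j ∧ z ≠ j)).erase v).erase v').card
      = m - 4 := by
    rw [Finset.card_erase_of_mem (by simp [pv', hv'.2.1, hne.symm]),
      Finset.card_erase_of_mem (by simp [pv, hv.2.1])]
    unfold dg at dj; omega
  let eA := Finset.equivFinOfCardEq cA
  let eB := Finset.equivFinOfCardEq cB
  let eC := Finset.equivFinOfCardEq cC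
  let φ : Fin 7 ⊕ (Fin (m - 1) ⊕ Fin (m - 4) ⊕ Fin (m - 1)) → V
    | Sum.inl n => (![i, u, v, j, v', w, k] : Fin 7 → V) n
    | Sum.inr (Sum.inl x) => (eA.symm x).1
    | Sum.inr (Sum.inr (Sum.inl x)) => (eB.symm x).1
    | Sum.inr (Sum.inr (Sum.inr x)) => (eC.symm x).1
  have lfi : ∀ z, p z = i → z ≠ i → lf i j k z := fun z h1 h2 =>
    ⟨h2, fun e => h.hij (by rw [← h1, e, h.pj]), fun e => h.hik (by rw [← h1, e, h.pk])⟩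
  have lfj : ∀ z, p z = j → z ≠ j → lf i j k z := fun z h1 h2 =>
    ⟨fun e => h.hij (by rw [← h1, e, h.pi]), h2, fun e => h.hjk (by rw [← h1, e, h.pk])⟩
  have lfk : ∀ z, p z = k → z ≠ k → lf i j k z := fun z h1 h2 =>
    ⟨fun e => h.hik (by rw [← h1, e, h.pi]), fun e => h.hjk (by rw [← h1, e, h.pj]), h2⟩
  have hsurj : Function.Surjective φ := by
    intro z
    by_cases z1 : z = i
    · exact ⟨Sum.inl 0, z1.symm⟩
    by_cases z2 : z = j
    · exact ⟨Sum.inl 3, z2.symm⟩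
    by_cases z3 : z = k
    · exact ⟨Sum.inl 6, z3.symm⟩
    by_cases z4 : z = u
    · exact ⟨Sum.inl 1, z4.symm⟩
    by_cases z5 : z = v
    · exact ⟨Sum.inl 2, z5.symm⟩
    by_cases z6 : z = v'
    · exact ⟨Sum.inl 4, z6.symm⟩
    by_cases z7 : z = w
    · exact ⟨Sum.inl 5, z7.symm⟩
    rcases (h.hp z z1 z2 z3).1 with hz | hz | hz
    · refine ⟨Sum.inr (Sum.inl (eA ⟨z, by simp [hz, z1, z4]⟩)), ?_⟩
      simp only [φ, Equiv.symm_apply_apply]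
    · refine ⟨Sum.inr (Sum.inr (Sum.inl (eB ⟨z, by simp [hz, z2, z5, z6]⟩))), ?_⟩
      simp only [φ, Equiv.symm_apply_apply]
    · refine ⟨Sum.inr (Sum.inr (Sum.inr (eC ⟨z, by simp [hz, z3, z7]⟩))), ?_⟩
      simp only [φ, Equiv.symm_apply_apply]
  have hbij : Function.Bijective φ := by
    rw [Fintype.bijective_iff_surjective_and_card]
    refine ⟨hsurj, ?_⟩
    rw [hV]
    simp only [Fintype.card_sum, Fintype.card_fin]
    omega
  have hle : G2graph (m - 1) (m - 4) (m - 1) ≤ G.comap φ := by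
    apply G2_le
    · show G.Adj i u
      exact pu ▸ adj u hu
    · exact huv
    · show G.Adj v j
      exact (pv ▸ adj v hv).symm
    · show G.Adj j v'
      exact pv' ▸ adj v' hv'
    · exact hvw
    · show G.Adj w k
      exact (pw ▸ adj w hw).symm
    · intro x
      have hx := (eA.symm x).2
      simp only [Finset.mem_erase, Finset.mem_filter, Finset.mem_univ, true_and] at hx
      have := adj _ (lfi _ hx.2.1 hx.2.2)
      rw [hx.2.1] at this
      exact this
    · intro x
      have hx := (eB.symm x).2
      simp only [Finset.mem_erase, Finset.mem_filter, Finset.mem_univ, true_and] at hx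
      have := adj _ (lfj _ hx.2.2.1 hx.2.2.2)
      rw [hx.2.2.1] at this
      exact this
    · intro x
      have hx := (eC.symm x).2
      simp only [Finset.mem_erase, Finset.mem_filter, Finset.mem_univ, true_and] at hx
      have := adj _ (lfk _ hx.2.1 hx.2.2)
      rw [hx.2.1] at this
      exact this
  let e : Fin 7 ⊕ (Fin (m - 1) ⊕ Fin (m - 4) ⊕ Fin (m - 1)) ≃ V := Equiv.ofBijective φ hbij
  let iso : G.comap φ ≃g G := SimpleGraph.Iso.comap e G
  have hl := h.hl
  have hs := h.hs
  have ts := h.ts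
  have hlt := h.hlt
  have c1 : ((m - 1 : ℕ) : ℝ) = m - 1 := by rw [Nat.cast_sub (by omega)]; norm_num
  have c2 : ((m - 4 : ℕ) : ℝ) = m - 4 := by rw [Nat.cast_sub (by omega)]; norm_num
  obtain ⟨K, hK⟩ : ∃ K, K = s * (lam ^ 2 - 1) - 1 := ⟨_, rfl⟩
  have hK1 : K * (s + 2) = 2 * (1 + s) := by rw [hK]; nlinarith
  have hK0 : 0 < K := by
    by_contra hc
    push Not at hc
    nlinarith
  have heq := eq_of_le_of_eigen _ _ hle (yV (m - 1) (m - 4) (m - 1) lam s K)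
    (yV_pos _ _ _ (by linarith) hs hK0)
    (yV_eigen _ _ _ (by linarith) (by rw [c1, hlt]; ring) (by rw [c2, hlt]; ring) rfl
      (by rw [hK]; ring) (by nlinarith)) ((specRad_iso iso).trans_le h.spec)
  rw [heq]
  exact ⟨iso.symm⟩

end Cfg

namespace Cfg

variable {V : Type*} [Fintype V] [DecidableEq V] {G : SimpleGraph V} {m : ℕ} {lam s : ℝ}
  {p : V → V} {i j k : V}

theorem lf_rev {v : V} (h : lf i j k v) : lf k j i v := ⟨h.2.2, h.2.1, h.1⟩

theorem lf_swp {v : V} (h : lf i j k v) : lf j i k v := ⟨h.2.1, h.1, h.2.2⟩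

theorem core (h : Cfg G m lam s p i j k) (hV : Fintype.card V = 3 * m + 1) {u v v' w : V}
    (hu : lf i j k u) (hv : lf i j k v) (hv' : lf i j k v') (hw : lf i j k w)
    (pu : p u = i) (pv : p v = j) (pv' : p v' = j) (pw : p w = k)
    (huv : G.Adj u v) (hvw : G.Adj v' w) :
    Nonempty (G ≃g G2graph (m - 1) (m - 4) (m - 1)) := by
  have hc := h.card
  have hi := h.dg_le
  have hj : dg p j ≤ m := h.swp.dg_le
  have hk : dg p k ≤ m := h.rev.dg_le
  have hcases : (dg p i = m ∧ dg p j = m) ∨ (dg p j = m ∧ dg p k = m) ∨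
      (dg p i + 1 = m ∧ dg p j = m ∧ dg p k + 1 = m) ∨
      (dg p i = m ∧ dg p j + 1 = m ∧ dg p k + 1 = m) ∨
      (dg p k = m ∧ dg p j + 1 = m ∧ dg p i + 1 = m) ∨
      (dg p i = m ∧ dg p j + 2 = m ∧ dg p k = m) := by omega
  rcases hcases with ⟨d1, d2⟩ | ⟨d1, d2⟩ | ⟨d1, d2, d3⟩ | ⟨d1, d2, d3⟩ | ⟨d1, d2, d3⟩ |
    ⟨d1, d2, d3⟩
  · exact (h.no_ll00 hu hv pu pv huv d1 d2).elim
  · exact (h.rev.swp.no_ll00 (lf_swp (lf_rev hv')) (lf_swp (lf_rev hw)) pv' pw hvw d1 d2).elim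
  · exact (h.no_101 hu hv hv' hw pu pv pv' pw huv hvw d1 d2 d3).elim
  · by_cases hne : v = v'
    · subst hne
      exact (h.no_011_spider hu hv hw pu pv pw huv hvw d1 d2).elim
    · exact (h.no_011_path hu hv hv' hw pu pv pv' pw huv hvw hne d1 d2 d3).elim
  · by_cases hne : v = v'
    · subst hne
      exact (h.rev.no_011_spider (lf_rev hw) (lf_rev hv) (lf_rev hu) pw pv pu hvw.symm huv.symm
        d1 d2).elim
    · exact (h.rev.no_011_path (lf_rev hw) (lf_rev hv') (lf_rev hv) (lf_rev hu) pw pv' pv pu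
        hvw.symm huv.symm (Ne.symm hne) d1 d2 d3).elim
  · by_cases hne : v = v'
    · subst hne
      exact (h.no_020_spider hu hv hw pu pv pw huv hvw d1 d2 d3).elim
    · exact h.target hV hu hv hv' hw pu pv pv' pw huv hvw hne d1 d2 d3

theorem exists_link (h : Cfg G m lam s p i j k) :
    ∃ u v, lf i j k u ∧ lf i j k v ∧ p u = i ∧ (p v = j ∨ p v = k) ∧ G.Adj u v := by
  obtain ⟨wlk⟩ := h.conn.preconnected i j
  obtain ⟨d, _, hd1, hd2⟩ := wlk.exists_boundary_dart {z | p z = i} h.pi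
    (fun hh => h.hij (by rw [← h.pj]; exact Eq.symm hh))
  have hadj := d.adj
  change p d.fst = i at hd1
  change ¬ (p d.snd = i) at hd2
  generalize d.fst = x at *
  generalize d.snd = y at *
  have hx2 : x ≠ j := fun e => h.hij (by rw [← hd1, e, h.pj])
  have hx3 : x ≠ k := fun e => h.hik (by rw [← hd1, e, h.pk])
  have hy1 : y ≠ i := fun e => hd2 (by rw [e, h.pi])
  have hik' : Cfg G m lam s p i k j := h.rev.swp.rev
  by_cases hx1 : x = i
  · exfalso
    subst hx1
    by_cases hy2 : y = j
    · exact h.no_cc (hy2 ▸ hadj)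
    by_cases hy3 : y = k
    · exact hik'.no_cc (hy3 ▸ hadj)
    rcases (h.hp y hy1 hy2 hy3).1 with e | e | e
    · exact hd2 e
    · exact h.no_cl y ⟨hy1, hy2, hy3⟩ e hadj
    · exact hik'.no_cl y ⟨hy1, hy3, hy2⟩ e hadj
  · by_cases hy2 : y = j
    · exact (h.swp.no_cl x ⟨hx2, hx1, hx3⟩ hd1 (hy2 ▸ hadj.symm)).elim
    by_cases hy3 : y = k
    · exact (hik'.swp.no_cl x ⟨hx3, hx1, hx2⟩ hd1 (hy3 ▸ hadj.symm)).elim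
    refine ⟨x, y, ⟨hx1, hx2, hx3⟩, ⟨hy1, hy2, hy3⟩, hd1, ?_, hadj⟩
    rcases (h.hp y hy1 hy2 hy3).1 with e | e | e
    · exact absurd e hd2
    · exact Or.inl e
    · exact Or.inr e

theorem final (h : Cfg G m lam s p i j k) (hV : Fintype.card V = 3 * m + 1) :
    Nonempty (G ≃g G2graph (m - 1) (m - 4) (m - 1)) := by
  obtain ⟨u, v, hu, hv, pu, pv, huv⟩ := h.exists_link
  rcases pv with pv | pv
  · obtain ⟨w, v', hw, hv', pw, pv', hwv⟩ := h.rev.exists_link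
    replace hw := lf_rev hw
    replace hv' := lf_rev hv'
    rcases pv' with pv' | pv'
    · exact h.core hV hu hv hv' hw pu pv pv' pw huv hwv.symm
    · exact h.swp.core hV (lf_swp hv) (lf_swp hu) (lf_swp hv') (lf_swp hw) pv pu pv' pw huv.symm
        hwv.symm
  · obtain ⟨w, v', hw, hv', pw, pv', hwv⟩ := h.swp.exists_link
    replace hw := lf_swp hw
    replace hv' := lf_swp hv'
    rcases pv' with pv' | pv'
    · exact h.swp.core hV (lf_swp hw) (lf_swp hv') (lf_swp hu) (lf_swp hv) pw pv' pu pv hwv huv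
    · exact h.rev.swp.rev.core hV (lf_rev (lf_swp (lf_rev hu))) (lf_rev (lf_swp (lf_rev hv)))
        (lf_rev (lf_swp (lf_rev hv'))) (lf_rev (lf_swp (lf_rev hw))) pu pv pv' pw huv hwv.symm

end Cfg

theorem exists_s (m : ℕ) (hm : 4 ≤ m) : ∃ s : ℝ, 0 < s ∧ s ^ 2 + s ≤ 1 ∧
    s * (m + s - 1) * (s + 2) = 3 * s + 4 := by
  have hm' : (4:ℝ) ≤ m := by exact_mod_cast hm
  have hcont : ContinuousOn (fun s : ℝ => s * (m + s - 1) * (s + 2) - (3 * s + 4))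
    (Set.Icc 0 1) := by fun_prop
  have := intermediate_value_Icc (zero_le_one) hcont
  obtain ⟨s, hs, hs0⟩ := this (show (0:ℝ) ∈ _ by
    constructor <;> norm_num <;> linarith)
  simp only at hs0
  have hs1 : 0 < s := by
    rcases hs.1.lt_or_eq with h | h
    · exact h
    · rw [← h] at hs0; norm_num at hs0
  refine ⟨s, hs1, ?_, by linarith⟩
  by_contra hc
  push Not at hc
  have h1 : (s ^ 2 + s - 1) * (s + 4) + (m - 4) * (s ^ 2 + 2 * s) = 0 := by
    linear_combination hs0
  have h2 : 0 < (s ^ 2 + s - 1) * (s + 4) := mul_pos (by linarith) (by linarith)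
  have h3 : 0 ≤ ((m:ℝ) - 4) * (s ^ 2 + 2 * s) := mul_nonneg (by linarith) (by positivity)
  linarith

theorem exists_cfg (m : ℕ) (hm : 4 ≤ m) (G : SimpleGraph (Fin (3 * m + 1))) (hconn : G.Connected)
    (hdom : domNum G = 3) (lam s : ℝ) (hl : 2 ≤ lam) (hs : 0 < s) (hss : s ^ 2 + s ≤ 1)
    (hlt : lam ^ 2 = m + s) (hkey : s * (lam ^ 2 - 1) * (s + 2) = 3 * s + 4)
    (hspec : specRad G ≤ lam) : ∃ p i j k, Cfg G m lam s p i j k := by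
  have hne : {n | ∃ D : Finset (Fin (3 * m + 1)), IsDomSet G D ∧ D.card = n}.Nonempty := by
    by_contra hh
    rw [Set.not_nonempty_iff_eq_empty] at hh
    unfold domNum at hdom
    rw [hh] at hdom
    simp at hdom
  have hmem := Nat.sInf_mem hne
  change domNum G ∈ _ at hmem
  rw [hdom] at hmem
  obtain ⟨D, hD, hD3⟩ := hmem
  have hch : ∀ v, ∃ c, (v ∈ D → c = v) ∧ (v ∉ D → c ∈ D ∧ G.Adj c v) := by
    intro v
    by_cases hv : v ∈ D
    · exact ⟨v, fun _ => rfl, fun h => absurd hv h⟩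
    · obtain ⟨c, hc⟩ := hD v hv
      exact ⟨c, fun h => absurd h hv, fun _ => hc⟩
  choose p hp1 hp2 using hch
  have hsum : ∑ c ∈ D, dg p c + 3 = 3 * m + 1 := by
    have h1 := Finset.card_eq_sum_card_fiberwise (s := Dᶜ) (t := D) (f := p)
      (fun v hv => (hp2 v (by simpa using hv)).1)
    have h2 : ∀ c ∈ D, (Dᶜ.filter (fun v => p v = c)).card = dg p c := by
      intro c hc
      unfold dg
      congr 1
      ext v
      simp only [Finset.mem_filter, Finset.mem_compl, Finset.mem_univ, true_and]
      constructor
      · rintro ⟨h1, h2⟩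
        exact ⟨h2, fun h3 => h1 (h3 ▸ hc)⟩
      · rintro ⟨h1, h2⟩
        exact ⟨fun h3 => h2 (by rw [← h1, hp1 v h3]), h1⟩
    have h3 : Dᶜ.card = ∑ c ∈ D, dg p c := by
      rw [h1]
      refine Finset.sum_congr rfl fun c hc => ?_
      rw [← h2 c hc]
    rw [Finset.card_compl, hD3, Fintype.card_fin] at h3
    omega
  obtain ⟨i, j, k, hij, hik, hjk, rfl⟩ := Finset.card_eq_three.1 hD3
  rw [Finset.sum_insert (by simp [hij, hik]), Finset.sum_insert (by simp [hjk]),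
    Finset.sum_singleton] at hsum
  refine ⟨p, i, j, k, hij, hik, hjk, hp1 _ (by simp), hp1 _ (by simp), hp1 _ (by simp), ?_,
    by omega, hm, hspec, hconn, hl, hs, hss, hlt, hkey⟩
  intro v h1 h2 h3
  have := hp2 v (by simp [h1, h2, h3])
  simpa using this

theorem domNum_three_min_specRad_n_eq_3m_add_one (m : ℕ) (hm : 4 ≤ m)
    (G : SimpleGraph (Fin (3 * m + 1))) (hconn : G.Connected) (hdom : domNum G = 3) :
    specRad (G2graph (m - 1) (m - 4) (m - 1)) ≤ specRad G ∧
    (specRad G = specRad (G2graph (m - 1) (m - 4) (m - 1)) ↔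
      Nonempty (G ≃g G2graph (m - 1) (m - 4) (m - 1))) := by
  obtain ⟨s, hs, hss, hk⟩ := exists_s m hm
  have hm' : (4:ℝ) ≤ m := by exact_mod_cast hm
  obtain ⟨lam, hlam⟩ : ∃ lam, lam = Real.sqrt (m + s) := ⟨_, rfl⟩
  have hlt : lam ^ 2 = m + s := by rw [hlam, Real.sq_sqrt (by linarith)]
  have hl : 2 ≤ lam := by
    rw [hlam]; exact Real.le_sqrt_of_sq_le (by linarith)
  have hkey : s * (lam ^ 2 - 1) * (s + 2) = 3 * s + 4 := by rw [hlt]; exact hk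
  have c1 : ((m - 1 : ℕ) : ℝ) = m - 1 := by rw [Nat.cast_sub (by omega)]; norm_num
  have c2 : ((m - 4 : ℕ) : ℝ) = m - 4 := by rw [Nat.cast_sub (by omega)]; norm_num
  obtain ⟨K, hK⟩ : ∃ K, K = s * (lam ^ 2 - 1) - 1 := ⟨_, rfl⟩
  have hK1 : K * (s + 2) = 2 * (1 + s) := by rw [hK]; nlinarith
  have hK0 : 0 < K := by
    by_contra hc
    push Not at hc
    nlinarith
  have hT : specRad (G2graph (m - 1) (m - 4) (m - 1)) ≤ lam :=
    specRad_le_of_eigen _ (by linarith) (yV (m - 1) (m - 4) (m - 1) lam s K)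
      (yV_pos _ _ _ (by linarith) hs hK0)
      (yV_eigen _ _ _ (by linarith) (by rw [c1, hlt]; ring) (by rw [c2, hlt]; ring) rfl
        (by rw [hK]; ring) (by nlinarith))
  by_cases hG : specRad G ≤ lam
  · obtain ⟨p, i, j, k, hcfg⟩ := exists_cfg m hm G hconn hdom lam s hl hs hss hlt hkey hG
    have hiso := hcfg.final (by simp)
    obtain ⟨e⟩ := hiso
    have := specRad_iso e
    exact ⟨this.ge, fun _ => ⟨e⟩, fun _ => this⟩
  · push Not at hG
    refine ⟨(hT.trans_lt hG).le, fun h => ?_, fun ⟨e⟩ => specRad_iso e⟩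
    exact absurd h (hT.trans_lt hG).ne'
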